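/- Let G be a finite undirected multigraph and let {v₁,...,vₘ} be a 3-edge-connected equivalence class of G containing m vertices. Then one can select m−1 short 3-weakly closed ttrails s₁,...,s_{m−1} between these vertices so that: (1) all the vertices v₁,...,vₘ are pairwise connected by these ttrails and/or by their concatenations; and (2) for any two distinct 3-edge-connected vertices v_i and v_j connected by some s_r, there exist two other ttrails p₁ and p₂ between v_i and v_j such that s_r, p₁ and p₂ are pairwise edge-disjoint. -/

import Mathlib

open Finset

/-- A finite undirected multigraph: each edge `e : E` has an unordered pair of
endpoints `ends e : Sym2 V`.  Loops and parallel edges are allowed and the graph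
need not be connected. -/
structure Multigraph (V E : Type*) where
  ends : E → Sym2 V

namespace Multigraph

variable {V E : Type*}

/-- `G.IsChain x y p` : `p` is an alternating sequence `v₁,e₁,…,vₙ,eₙ` (encoded as a
list of vertex-edge pairs) which forms a walk from `x` to `y` (the final vertex `y`
is omitted, i.e. this is "truncated"). -/
def IsChain (G : Multigraph V E) : V → V → List (V × E) → Prop
  | x, y, [] => x = y
  | x, y, (v, e) :: rest => v = x ∧ ∃ w, G.ends e = s(x, w) ∧ G.IsChain w y rest

/-- A truncated trail (ttrail) from `x` to `y`: an alternating walk with no repeated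
edges, final vertex omitted. -/
def IsTtrail (G : Multigraph V E) (x y : V) (p : List (V × E)) : Prop :=
  G.IsChain x y p ∧ (p.map Prod.snd).Nodup

/-- A cycle: a closed ttrail with no repeated vertices. -/
def IsCycle (G : Multigraph V E) (x : V) (p : List (V × E)) : Prop :=
  G.IsTtrail x x p ∧ (p.map Prod.fst).Nodup

/-- Two ttrails are edge-disjoint if they have no common edges. -/
def EdgeDisjoint (p q : List (V × E)) : Prop :=
  ∀ e, e ∈ p.map Prod.snd → e ∉ q.map Prod.snd

/-- `k`-edge-connectivity: two distinct vertices are `k`-edge-connected if there are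
`k` pairwise edge-disjoint ttrails between them; every vertex is `k`-edge-connected
to itself. -/
def KConn (G : Multigraph V E) (k : ℕ) (v w : V) : Prop :=
  v = w ∨ ∃ p : Fin k → List (V × E),
    (∀ i, G.IsTtrail v w (p i)) ∧ ∀ i j, i ≠ j → EdgeDisjoint (p i) (p j)

/-- `conk G k` : the number of equivalence classes of `k`-edge-connected vertices. -/
noncomputable def conk (G : Multigraph V E) (k : ℕ) : ℕ :=
  Nat.card (Quotient (Relation.EqvGen.setoid (G.KConn k)))

/-- The number of connected components of `G`. -/
noncomputable def con (G : Multigraph V E) : ℕ := G.conk 1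

section Homology

variable [Fintype V] [Fintype E] [DecidableEq V] [DecidableEq E]

/-- The vector in `F₂^V` which is the sum of the two endpoints of the edge `e`
(so a loop is sent to `0`). -/
def edgeVec (G : Multigraph V E) (e : E) : V → ZMod 2 := fun v =>
  Sym2.lift ⟨fun a b => (if v = a then (1 : ZMod 2) else 0) + (if v = b then 1 else 0),
    fun _ _ => add_comm _ _⟩ (G.ends e)

/-- The boundary map `δ : F₂^E → F₂^V`, sending each edge to the sum of its two
adjacent vertices. -/
def boundary (G : Multigraph V E) : (E → ZMod 2) →ₗ[ZMod 2] (V → ZMod 2) where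
  toFun c := fun v => ∑ e, c e * G.edgeVec e v
  map_add' c d := by
    funext v
    simp [add_mul, Finset.sum_add_distrib]
  map_smul' r c := by
    funext v
    simp [Finset.mul_sum, mul_assoc]

/-- The Cycle Space of `G` : the kernel of the boundary map. -/
def cycleSpace (G : Multigraph V E) : Submodule (ZMod 2) (E → ZMod 2) :=
  LinearMap.ker G.boundary

/-- The indicator vector of a vertex in `F₂^V`. -/
def vert (v : V) : V → ZMod 2 := fun w => if w = v then 1 else 0

/-- A `k`-weak homological cycle: a homological path between two `k`-edge-connected
vertices. -/
def IsWeakCycle (G : Multigraph V E) (k : ℕ) (c : E → ZMod 2) : Prop :=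
  ∃ v w, G.KConn k v w ∧ G.boundary c = vert v + vert w

/-- The `k`-Weak Cycle Space: the span of all `k`-weak homological cycles. -/
def weakCycleSpace (G : Multigraph V E) (k : ℕ) : Submodule (ZMod 2) (E → ZMod 2) :=
  Submodule.span (ZMod 2) {c | G.IsWeakCycle k c}

/-- `eps p` : the set of edges of the ttrail `p`, as a vector in `F₂^E`. -/
def eps (p : List (V × E)) : E → ZMod 2 := fun e => if e ∈ p.map Prod.snd then 1 else 0

/-- The `F₂`-linear extension of `f : E → A` to subsets of `E`: the sum of `f` over
the edges of the subset `S`. -/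
def fSum {A : Type*} [AddCommGroup A] (f : E → A) (S : E → ZMod 2) : A :=
  ∑ e ∈ Finset.univ.filter fun e => S e = 1, f e

end Homology

section Balanced

variable {A : Type*} [AddCommGroup A]

/-- The sum `g(v₁)+f(e₁)+…+g(vₙ)+f(eₙ)` of the values of a vertex-function `g` and an
edge-function `f` along a ttrail `v₁,e₁,…,vₙ,eₙ`. -/
def pathSum (g : V → A) (f : E → A) (p : List (V × E)) : A :=
  (p.map fun ve => g ve.1 + f ve.2).sum

/-- The sum `h(v₁)+h(e₁)+…+h(vₙ)+h(eₙ)` of the values of `h : V ∪ E → A` along a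
ttrail `v₁,e₁,…,vₙ,eₙ`. -/
def wSum (h : V ⊕ E → A) (p : List (V × E)) : A :=
  (p.map fun ve => h (Sum.inl ve.1) + h (Sum.inr ve.2)).sum

lemma pathSum_cons (g : V → A) (f : E → A) (a : V × E) (t : List (V × E)) :
    pathSum g f (a :: t) = (g a.1 + f a.2) + pathSum g f t := by
  simp [pathSum]

lemma pathSum_zero (p : List (V × E)) : pathSum (0 : V → A) (0 : E → A) p = 0 := by
  induction p with
  | nil => simp [pathSum]
  | cons a t ih => simp [pathSum_cons, ih]

lemma pathSum_add (g g' : V → A) (f f' : E → A) (p : List (V × E)) :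
    pathSum (g + g') (f + f') p = pathSum g f p + pathSum g' f' p := by
  induction p with
  | nil => simp [pathSum]
  | cons a t ih => simp only [pathSum_cons, Pi.add_apply, ih]; abel

lemma pathSum_neg (g : V → A) (f : E → A) (p : List (V × E)) :
    pathSum (-g) (-f) p = -pathSum g f p := by
  induction p with
  | nil => simp [pathSum]
  | cons a t ih => simp only [pathSum_cons, Pi.neg_apply, ih]; abel

lemma wSum_cons (h : V ⊕ E → A) (a : V × E) (t : List (V × E)) :
    wSum h (a :: t) = (h (Sum.inl a.1) + h (Sum.inr a.2)) + wSum h t := by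
  simp [wSum]

lemma wSum_zero (p : List (V × E)) : wSum (0 : V ⊕ E → A) p = 0 := by
  induction p with
  | nil => simp [wSum]
  | cons a t ih => simp [wSum_cons, ih]

lemma wSum_add (h h' : V ⊕ E → A) (p : List (V × E)) :
    wSum (h + h') p = wSum h p + wSum h' p := by
  induction p with
  | nil => simp [wSum]
  | cons a t ih => simp only [wSum_cons, Pi.add_apply, ih]; abel

lemma wSum_neg (h : V ⊕ E → A) (p : List (V × E)) :
    wSum (-h) p = -wSum h p := by
  induction p with
  | nil => simp [wSum]
  | cons a t ih => simp only [wSum_cons, Pi.neg_apply, ih]; abel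

/-- A function `f : E → A` is balanced if the sum of its values along every closed
ttrail of `G` is zero. -/
def BalancedE (G : Multigraph V E) (f : E → A) : Prop :=
  ∀ x p, G.IsTtrail x x p → pathSum (0 : V → A) f p = 0

/-- A function `g : V → A` is balanceable if some `f : E → A` balances it, i.e. the
sum of the values of `g` and `f` along every closed ttrail of `G` is zero. -/
def Balanceable (G : Multigraph V E) (g : V → A) : Prop :=
  ∃ f : E → A, ∀ x p, G.IsTtrail x x p → pathSum g f p = 0

/-- A function `h : V ∪ E → A` is balanced if the sum of its values along every
closed ttrail of `G` is zero. -/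
def BalancedW (G : Multigraph V E) (h : V ⊕ E → A) : Prop :=
  ∀ x p, G.IsTtrail x x p → wSum h p = 0

/-- `H(E,A)` : the group of balanced functions from `E` to `A`. -/
def Hgroup (G : Multigraph V E) (A : Type*) [AddCommGroup A] : AddSubgroup (E → A) where
  carrier := {f | G.BalancedE f}
  zero_mem' := fun _ p _ => pathSum_zero p
  add_mem' := by
    intro f f' hf hf' x p hp
    have h := pathSum_add (0 : V → A) 0 f f' p
    rw [add_zero] at h
    rw [h, hf x p hp, hf' x p hp, add_zero]
  neg_mem' := by
    intro f hf x p hp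
    have h := pathSum_neg (0 : V → A) f p
    rw [neg_zero] at h
    rw [h, hf x p hp, neg_zero]

/-- `B(V,A)` : the group of balanceable functions from `V` to `A`. -/
def Bgroup (G : Multigraph V E) (A : Type*) [AddCommGroup A] : AddSubgroup (V → A) where
  carrier := {g | G.Balanceable g}
  zero_mem' := ⟨0, fun _ p _ => pathSum_zero p⟩
  add_mem' := by
    rintro g g' ⟨f, hf⟩ ⟨f', hf'⟩
    exact ⟨f + f', fun x p hp => by rw [pathSum_add, hf x p hp, hf' x p hp, add_zero]⟩
  neg_mem' := by
    rintro g ⟨f, hf⟩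
    exact ⟨-f, fun x p hp => by rw [pathSum_neg, hf x p hp, neg_zero]⟩

/-- `W(V ∪ E, A)` : the group of balanced functions from `V ∪ E` to `A`. -/
def Wgroup (G : Multigraph V E) (A : Type*) [AddCommGroup A] : AddSubgroup (V ⊕ E → A) where
  carrier := {h | G.BalancedW h}
  zero_mem' := fun _ p _ => wSum_zero p
  add_mem' := by
    intro h h' hh hh' x p hp
    rw [wSum_add, hh x p hp, hh' x p hp, add_zero]
  neg_mem' := by
    intro h hh x p hp
    rw [wSum_neg, hh x p hp, neg_zero]

end Balanced

/-- A `3`-weakly closed ttrail (a ttrail between `3`-edge-connected vertices) which is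
short: no inner vertex is `3`-edge-connected to the initial vertex. -/
def ShortW (G : Multigraph V E) (x y : V) (p : List (V × E)) : Prop :=
  G.IsTtrail x y p ∧ G.KConn 3 x y ∧ ∀ v ∈ (p.map Prod.fst).tail, ¬ G.KConn 3 v x

/-- `G.ShortChain x y L` : `L` is a list of nontrivial short `3`-weakly closed ttrails
which concatenate into a ttrail from `x` to `y`. -/
def ShortChain (G : Multigraph V E) : V → V → List (List (V × E)) → Prop
  | x, y, [] => x = y
  | x, y, s :: rest => s ≠ [] ∧ ∃ z, G.ShortW x z s ∧ G.ShortChain z y rest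

/-- `A₂` : the subgroup of elements of order dividing `2` in `A`. -/
def torsion2 (A : Type*) [AddCommGroup A] : AddSubgroup A where
  carrier := {a | 2 • a = 0}
  zero_mem' := by simp
  add_mem' := by
    intro a b ha hb
    simp only [Set.mem_setOf_eq] at *
    rw [smul_add, ha, hb, add_zero]
  neg_mem' := by
    intro a ha
    simp only [Set.mem_setOf_eq] at *
    rw [smul_neg, ha, neg_zero]

/-- `2A` : the image of the doubling map `a ↦ 2a`. -/
def double2 (A : Type*) [AddCommGroup A] : AddSubgroup A where
  carrier := {b | ∃ a, b = 2 • a}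
  zero_mem' := ⟨0, by simp⟩
  add_mem' := by
    rintro a b ⟨x, rfl⟩ ⟨y, rfl⟩
    exact ⟨x + y, by rw [smul_add]⟩
  neg_mem' := by
    rintro a ⟨x, rfl⟩
    exact ⟨-x, by rw [smul_neg]⟩

end Multigraph

namespace Multigraph

variable {V E : Type*} [Fintype V] [Fintype E] [DecidableEq V] [DecidableEq E]

/-!
Let `s` be a short trail from `a` to `b`. By Menger's theorem, two further edge-disjoint trails
exist once every cut separating `a` from `b` has two edges outside `s`. Each inner vertex of `s`
is separated from `a` by a cut with at most two edges; when two such cuts are merged along `s`,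
each of them loses an edge of `s`, so the merged cut again has at most two edges. In the end one
obtains a set `Y` that contains all inner vertices, avoids `a` and `b`, and is left only by the
first and the last edge of `s`. If `X` contains `a` but not `b`, the first edge is therefore the
only edge of `s` leaving `X \ Y`, whose other boundary edges, at least two in number, leave `X` as
well.

Cutting a trail at its vertices in the class of `a` shows that short trails connect the class, and
a spanning tree selects `m - 1` of them.
-/

section General

variable {V E : Type*} (G : Multigraph V E)

/-! ### Chains and cuts -/

section Chains

variable {G} {x y : V} {p q : List (V × E)}

lemma isChain_append :
    G.IsChain x y (p ++ q) ↔ ∃ z, G.IsChain x z p ∧ G.IsChain z y q := by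
  induction p generalizing x with
  | nil => simp [IsChain]
  | cons arc t ih =>
    simp only [List.cons_append, IsChain, ih]
    tauto

lemma IsChain.exists_append_of_mem {z : V} {e : E} (hp : G.IsChain x y p) (hz : (z, e) ∈ p) :
    ∃ q r, p = q ++ (z, e) :: r ∧ G.IsChain x z q ∧ G.IsChain z y ((z, e) :: r) := by
  obtain ⟨q, r, rfl⟩ := List.append_of_mem hz
  obtain ⟨z', hq, rfl, hr⟩ := isChain_append.1 hp
  exact ⟨q, r, rfl, hq, rfl, hr⟩

/-- Two cases arise when the first edge `e` of a walk is used again: the second use runs in the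
same direction, and the loop in between is dropped, or in the opposite direction, and both uses of
`e` are dropped as well. -/
lemma IsChain.exists_isTtrail_subset (hp : G.IsChain x y p) : ∃ q ⊆ p, G.IsTtrail x y q := by
  induction p generalizing x with
  | nil => exact ⟨[], List.Subset.refl _, hp, List.nodup_nil⟩
  | cons arc t ih =>
    obtain ⟨x', e⟩ := arc
    obtain ⟨rfl, w, hw, ht⟩ := hp
    obtain ⟨q, hqt, hq, hnodup⟩ := ih ht
    by_cases he : e ∈ q.map Prod.snd
    · obtain ⟨⟨z, e'⟩, hz, rfl⟩ := List.mem_map.1 he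
      obtain ⟨q₁, q₂, rfl, -, -, z', hz', hq₂⟩ := hq.exists_append_of_mem hz
      rw [List.map_append] at hnodup
      have hsuffix := hnodup.of_append_right
      have hq₂t : q₂ ⊆ t := fun arc harc => hqt (by simp [harc])
      rcases Sym2.eq_iff.1 (hw.symm.trans hz') with ⟨rfl, rfl⟩ | ⟨rfl, rfl⟩
      · exact ⟨_ :: q₂, List.cons_subset_cons _ hq₂t, ⟨rfl, w, hw, hq₂⟩, hsuffix⟩
      · exact ⟨q₂, List.subset_cons_of_subset _ hq₂t, hq₂, hsuffix.of_cons⟩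
    · exact ⟨(x', e) :: q, List.cons_subset_cons _ hqt, ⟨rfl, w, hw, hq⟩,
        List.nodup_cons.2 ⟨he, hnodup⟩⟩

/-- The vertices of a chain `p` that ends at `y`, including the vertex `y` which the truncated
encoding omits. -/
def vertices (p : List (V × E)) (y : V) : List V := p.map Prod.fst ++ [y]

@[simp]
lemma vertices_nil : vertices ([] : List (V × E)) y = [y] := rfl

@[simp]
lemma vertices_cons (arc : V × E) : vertices (arc :: p) y = arc.1 :: vertices p y := rfl

lemma IsChain.left_mem_vertices (hp : G.IsChain x y p) : x ∈ vertices p y := by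
  cases p with
  | nil => exact List.mem_singleton.2 hp
  | cons arc t => simp [hp.1]

lemma IsChain.mem_vertices_of_mem_ends (hp : G.IsChain x y p) {e : E} (he : e ∈ p.map Prod.snd)
    {z : V} (hz : z ∈ G.ends e) : z ∈ vertices p y := by
  induction p generalizing x with
  | nil => simp at he
  | cons arc t ih =>
    obtain ⟨rfl, w, hw, ht⟩ := hp
    rcases List.mem_cons.1 he with rfl | he
    · rw [hw, Sym2.mem_iff] at hz
      rcases hz with rfl | rfl
      · exact List.mem_cons_self
      · exact List.mem_cons_of_mem _ ht.left_mem_vertices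
    · exact List.mem_cons_of_mem _ (ih ht he)

end Chains

/-- The edge cut of `X`: the edges with exactly one endpoint in `X`. -/
def cut (X : Set V) : Set E := {e | ∃ x y, G.ends e = s(x, y) ∧ x ∈ X ∧ y ∉ X}

section Cuts

variable {G} {x y : V} {e : E} {p : List (V × E)} {X Y : Set V}

lemma mem_cut_iff (he : G.ends e = s(x, y)) : e ∈ G.cut X ↔ ¬(x ∈ X ↔ y ∈ X) := by
  constructor
  · rintro ⟨x', y', he', hx', hy'⟩
    rcases Sym2.eq_iff.1 (he.symm.trans he') with ⟨rfl, rfl⟩ | ⟨rfl, rfl⟩ <;> tauto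
  · intro hxy
    by_cases hx : x ∈ X
    · exact ⟨x, y, he, hx, by tauto⟩
    · exact ⟨y, x, he.trans Sym2.eq_swap, by tauto, hx⟩

lemma cut_compl : G.cut Xᶜ = G.cut X := by
  ext e
  induction he : G.ends e with | _ x y
  simp only [mem_cut_iff he, Set.mem_compl_iff, not_iff_not]

lemma cut_empty : G.cut ∅ = ∅ := by
  ext e
  simp [cut]

lemma IsChain.exists_mem_cut (hp : G.IsChain x y p) {z : V} (hz : z ∈ vertices p y)
    (hxz : ¬(x ∈ X ↔ z ∈ X)) : ∃ e ∈ p.map Prod.snd, e ∈ G.cut X := by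
  induction p generalizing x with
  | nil =>
    obtain rfl : x = y := hp
    obtain rfl : z = x := by simpa using hz
    exact absurd Iff.rfl hxz
  | cons arc t ih =>
    obtain ⟨x', e⟩ := arc
    obtain ⟨rfl, w, hw, ht⟩ := hp
    by_cases hxw : x' ∈ X ↔ w ∈ X
    · have hzt : z ∈ vertices t y := (List.mem_cons.1 hz).resolve_left fun h => hxz (by rw [h])
      obtain ⟨g, hgt, hg⟩ := ih ht hzt (by rwa [← hxw])
      exact ⟨g, List.mem_cons_of_mem _ hgt, hg⟩
    · exact ⟨e, List.mem_cons_self, (mem_cut_iff hw).2 hxw⟩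

lemma IsChain.notMem_cut (hp : G.IsChain x y p) (hX : ∀ z ∈ vertices p y, z ∈ X)
    (he : e ∈ p.map Prod.snd) : e ∉ G.cut X := by
  rintro ⟨u, w, huw, -, hw⟩
  exact hw (hX w (hp.mem_vertices_of_mem_ends he (by simp [huw])))

lemma encard_cut_union_add_two_le {g : E} (he : e ∈ G.cut X) (hg : g ∈ G.cut Y)
    (he' : e ∉ G.cut (X ∪ Y)) (hg' : g ∉ G.cut (X ∪ Y)) :
    (G.cut (X ∪ Y)).encard + 2 ≤ (G.cut X).encard + (G.cut Y).encard := by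
  have hsub : G.cut (X ∪ Y) ⊆ (G.cut X \ {e}) ∪ (G.cut Y \ {g}) := by
    intro q hq
    have hqe : q ≠ e := by rintro rfl; exact he' hq
    have hqg : q ≠ g := by rintro rfl; exact hg' hq
    induction huw : G.ends q with | _ u w
    simp only [Set.mem_union, Set.mem_sdiff, Set.mem_singleton_iff, mem_cut_iff huw] at hq ⊢
    tauto
  calc (G.cut (X ∪ Y)).encard + 2
      ≤ ((G.cut X \ {e}).encard + (G.cut Y \ {g}).encard) + 2 := by
        gcongr
        exact (Set.encard_le_encard hsub).trans (Set.encard_union_le _ _)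
    _ = ((G.cut X \ {e}).encard + 1) + ((G.cut Y \ {g}).encard + 1) := by ring
    _ = (G.cut X).encard + (G.cut Y).encard := by
        rw [Set.encard_sdiff_singleton_add_one he, Set.encard_sdiff_singleton_add_one hg]

lemma exists_isTtrail_or_exists_cut (A : V × E → Prop) (a b : V) :
    (∃ p, G.IsTtrail a b p ∧ ∀ arc ∈ p, A arc) ∨
      ∃ X : Set V, a ∈ X ∧ b ∉ X ∧
        ∀ e x y, G.ends e = s(x, y) → x ∈ X → y ∉ X → ¬A (x, e) := by
  let X : Set V := {y | ∃ p, G.IsChain a y p ∧ ∀ arc ∈ p, A arc}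
  by_cases hb : b ∈ X
  · obtain ⟨p, hp, hA⟩ := hb
    obtain ⟨q, hqp, hq⟩ := hp.exists_isTtrail_subset
    exact Or.inl ⟨q, hq, fun arc harc => hA arc (hqp harc)⟩
  · refine Or.inr ⟨X, ⟨[], rfl, by simp⟩, hb, ?_⟩
    rintro e x y he ⟨p, hp, hA⟩ hy hxe
    refine hy ⟨p ++ [(x, e)], isChain_append.2 ⟨x, hp, rfl, y, he, rfl⟩, fun arc harc => ?_⟩
    rcases List.mem_append.1 harc with harc | harc
    · exact hA arc harc
    · rwa [List.mem_singleton.1 harc]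

end Cuts

/-! ### Unit flows and Menger's theorem -/

section Orientation

/-- The tail of `e` in an arbitrarily chosen orientation of `G`. -/
noncomputable def src (e : E) : V := (Quot.out (G.ends e)).1

/-- The head of `e` in the orientation chosen for `src`. -/
noncomputable def tgt (e : E) : V := (Quot.out (G.ends e)).2

open Classical in
/-- The sign with which a unit sent from `x` along `e` counts in the chosen orientation: `1` if
`x` is the tail of `e`, and `-1` otherwise. -/
noncomputable def arcSign (x : V) (e : E) : ℤ := if x = G.src e then 1 else -1

lemma arcSign_eq_one_or_neg_one (x : V) (e : E) : G.arcSign x e = 1 ∨ G.arcSign x e = -1 := by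
  unfold arcSign
  split_ifs <;> simp

variable {G} {e : E} {x y : V}

lemma ends_eq_src_tgt : G.ends e = s(G.src e, G.tgt e) := (Quot.out_eq (G.ends e)).symm

lemma arcSign_src : G.arcSign (G.src e) e = 1 := if_pos rfl

lemma arcSign_eq_neg_one (hx : x ≠ G.src e) : G.arcSign x e = -1 := if_neg hx

lemma eq_src_tgt_or_eq_tgt_src (he : G.ends e = s(x, y)) :
    (x = G.src e ∧ y = G.tgt e) ∨ (x ≠ G.src e ∧ x = G.tgt e ∧ y = G.src e) := by
  rcases Sym2.eq_iff.1 (he.symm.trans ends_eq_src_tgt) with h | ⟨hx, hy⟩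
  · exact Or.inl h
  · by_cases hxs : x = G.src e
    · exact Or.inl ⟨hxs, by rw [hy, ← hxs, hx]⟩
    · exact Or.inr ⟨hxs, hx, hy⟩

end Orientation

section Flows

open Finsupp (single)

/-- The divergence of an integral flow: the net flow into each vertex. A negative value on an edge
means that the flow runs against the chosen orientation. -/
noncomputable def netInflow : (E →₀ ℤ) →ₗ[ℤ] (V →₀ ℤ) :=
  Finsupp.linearCombination ℤ fun e => single (G.tgt e) 1 - single (G.src e) 1

/-- The flow sending one unit along the chain `p`. -/
noncomputable def chainFlow (p : List (V × E)) : E →₀ ℤ :=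
  (p.map fun arc => single arc.2 (G.arcSign arc.1 arc.2)).sum

/-- The sign with which a flow along the chosen orientation of `e` leaves `X`: `1` if `e` is
directed out of `X`, `-1` if it is directed into `X`, and `0` if it does not cross the cut. -/
noncomputable def cutSign (X : Set V) (e : E) : ℤ :=
  X.indicator 1 (G.src e) - X.indicator 1 (G.tgt e)

/-- An integral flow `f` of value `n` from `a` to `b` that runs inside the edge set `F` and
respects unit edge capacities. -/
structure IsUnitFlow (F : Set E) (a b : V) (n : ℕ) (f : E →₀ ℤ) : Prop where
  abs_le_one : ∀ e, |f e| ≤ 1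
  eq_zero : ∀ e ∉ F, f e = 0
  netInflow_eq : G.netInflow f = n • (single b 1 - single a 1)

variable {G} {F : Set E} {X : Set V} {a b x y : V} {e : E} {n : ℕ} {f : E →₀ ℤ}
  {p : List (V × E)}

lemma chainFlow_cons (arc : V × E) :
    G.chainFlow (arc :: p) = single arc.2 (G.arcSign arc.1 arc.2) + G.chainFlow p := rfl

lemma netInflow_single_arcSign (he : G.ends e = s(x, y)) :
    G.netInflow (single e (G.arcSign x e)) = single y 1 - single x 1 := by
  rw [netInflow, Finsupp.linearCombination_single]
  rcases eq_src_tgt_or_eq_tgt_src he with ⟨rfl, rfl⟩ | ⟨hx, rfl, rfl⟩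
  · rw [arcSign_src, one_smul]
  · rw [arcSign_eq_neg_one hx, neg_one_smul, neg_sub]

lemma IsChain.netInflow_chainFlow (hp : G.IsChain x y p) :
    G.netInflow (G.chainFlow p) = single y 1 - single x 1 := by
  induction p generalizing x with
  | nil =>
    obtain rfl : x = y := hp
    simp [chainFlow]
  | cons arc t ih =>
    obtain ⟨rfl, w, hw, ht⟩ := hp
    rw [chainFlow_cons, map_add, netInflow_single_arcSign hw, ih ht]
    abel

lemma chainFlow_apply_of_notMem (he : e ∉ p.map Prod.snd) : G.chainFlow p e = 0 := by
  induction p with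
  | nil => rfl
  | cons arc t ih =>
    rw [List.map_cons, List.mem_cons, not_or] at he
    rw [chainFlow_cons, Finsupp.add_apply, ih he.2, Finsupp.single_eq_of_ne he.1, zero_add]

lemma chainFlow_apply_of_mem (hp : (p.map Prod.snd).Nodup) (hxe : (x, e) ∈ p) :
    G.chainFlow p e = G.arcSign x e := by
  induction p with
  | nil => simp at hxe
  | cons arc t ih =>
    rw [List.map_cons, List.nodup_cons] at hp
    rcases List.mem_cons.1 hxe with rfl | hxe
    · rw [chainFlow_cons, Finsupp.add_apply, chainFlow_apply_of_notMem hp.1,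
        Finsupp.single_eq_same, add_zero]
    · have hne : e ≠ arc.2 := fun h => hp.1 (h ▸ List.mem_map_of_mem (f := Prod.snd) hxe)
      rw [chainFlow_cons, Finsupp.add_apply, ih hp.2 hxe, Finsupp.single_eq_of_ne hne, zero_add]

lemma cutSign_eq_arcSign (he : G.ends e = s(x, y)) (hx : x ∈ X) (hy : y ∉ X) :
    G.cutSign X e = G.arcSign x e := by
  rcases eq_src_tgt_or_eq_tgt_src he with ⟨rfl, rfl⟩ | ⟨hxs, rfl, rfl⟩
  · simp [cutSign, arcSign_src, hx, hy]
  · simp [cutSign, arcSign_eq_neg_one hxs, hx, hy]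

lemma cutSign_eq_zero (he : e ∉ G.cut X) : G.cutSign X e = 0 := by
  classical
  rw [mem_cut_iff ends_eq_src_tgt, not_not] at he
  simp [cutSign, Set.indicator_apply, he]

namespace IsUnitFlow

lemma sum_mul_cutSign (hf : G.IsUnitFlow F a b n f) (ha : a ∈ X) (hb : b ∉ X) :
    f.sum (fun e z => z * G.cutSign X e) = n := by
  let inflow : (V →₀ ℤ) →ₗ[ℤ] ℤ := Finsupp.linearCombination ℤ (X.indicator 1)
  have hedge (e : E) : inflow (single (G.tgt e) 1 - single (G.src e) 1) = -G.cutSign X e := by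
    simp [inflow, cutSign]
  have hvalue : inflow (G.netInflow f) = -n := by
    rw [hf.netInflow_eq]
    simp [inflow, ha, hb]
  rw [netInflow, Finsupp.apply_linearCombination, Finsupp.linearCombination_apply] at hvalue
  simpa [hedge, Finsupp.sum] using hvalue

lemma add_chainFlow (hf : G.IsUnitFlow F a b n f) (hp : G.IsTtrail a b p)
    (hres : ∀ arc ∈ p, arc.2 ∈ F ∧ f arc.2 * G.arcSign arc.1 arc.2 < 1) :
    G.IsUnitFlow F a b (n + 1) (f + G.chainFlow p) where
  abs_le_one e := by
    by_cases he : e ∈ p.map Prod.snd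
    · obtain ⟨⟨x, e⟩, hxe, rfl⟩ := List.mem_map.1 he
      rw [Finsupp.add_apply, chainFlow_apply_of_mem hp.2 hxe]
      have hfe := abs_le.1 (hf.abs_le_one e)
      have hlt := (hres _ hxe).2
      rcases G.arcSign_eq_one_or_neg_one x e with hs | hs <;>
        simp only [hs] at hlt ⊢ <;> rw [abs_le] <;> omega
    · rw [Finsupp.add_apply, chainFlow_apply_of_notMem he, add_zero]
      exact hf.abs_le_one e
  eq_zero e he := by
    have hep : e ∉ p.map Prod.snd := by
      rw [List.mem_map]
      rintro ⟨arc, harc, rfl⟩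
      exact he (hres arc harc).1
    rw [Finsupp.add_apply, chainFlow_apply_of_notMem hep, hf.eq_zero e he, add_zero]
  netInflow_eq := by
    rw [map_add, hf.netInflow_eq, hp.1.netInflow_chainFlow, succ_nsmul]

lemma sub_chainFlow (hf : G.IsUnitFlow F a b (n + 1) f) (hp : G.IsTtrail a b p)
    (hpos : ∀ arc ∈ p, f arc.2 = G.arcSign arc.1 arc.2) :
    G.IsUnitFlow (F \ {e | e ∈ p.map Prod.snd}) a b n (f - G.chainFlow p) := by
  have hon : ∀ e ∈ p.map Prod.snd, (f - G.chainFlow p) e = 0 := by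
    intro e he
    obtain ⟨⟨x, e⟩, hxe, rfl⟩ := List.mem_map.1 he
    rw [Finsupp.sub_apply, chainFlow_apply_of_mem hp.2 hxe, hpos _ hxe, sub_self]
  have hoff : ∀ e ∉ p.map Prod.snd, (f - G.chainFlow p) e = f e := by
    intro e he
    rw [Finsupp.sub_apply, chainFlow_apply_of_notMem he, sub_zero]
  refine ⟨fun e => ?_, fun e he => ?_, ?_⟩
  · by_cases hep : e ∈ p.map Prod.snd
    · simp [hon e hep]
    · simpa only [hoff e hep] using hf.abs_le_one e
  · by_cases hep : e ∈ p.map Prod.snd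
    · exact hon e hep
    · rw [hoff e hep]
      exact hf.eq_zero e fun heF => he ⟨heF, hep⟩
  · rw [map_sub, hf.netInflow_eq, hp.1.netInflow_chainFlow, succ_nsmul, add_sub_cancel_right]

lemma encard_inter_cut (hf : G.IsUnitFlow F a b n f) (ha : a ∈ X) (hb : b ∉ X)
    (hsat : ∀ e ∈ F ∩ G.cut X, f e * G.cutSign X e = 1) : (F ∩ G.cut X).encard = n := by
  classical
  have hinter : F ∩ G.cut X = ↑(f.support.filter (· ∈ G.cut X)) := by
    ext e
    simp only [coe_filter, Finsupp.mem_support_iff, Set.mem_inter_iff, Set.mem_ofPred]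
    refine and_congr_left fun hcut => ⟨fun heF hfe => ?_, fun hfe => ?_⟩
    · simpa [hfe] using hsat e ⟨heF, hcut⟩
    · by_contra heF
      exact hfe (hf.eq_zero e heF)
  have hterm : ∀ e ∈ f.support, f e * G.cutSign X e = if e ∈ G.cut X then 1 else 0 := by
    intro e hfe
    split_ifs with hcut
    · refine hsat e ⟨?_, hcut⟩
      by_contra heF
      exact Finsupp.mem_support_iff.1 hfe (hf.eq_zero e heF)
    · rw [cutSign_eq_zero hcut, mul_zero]
  have hvalue := hf.sum_mul_cutSign ha hb
  rw [Finsupp.sum, sum_congr rfl hterm, sum_boole] at hvalue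
  rw [hinter, Set.encard_coe_eq_coe_finsetCard]
  exact_mod_cast hvalue

lemma exists_succ (hf : G.IsUnitFlow F a b n f)
    (hcut : ∀ X : Set V, a ∈ X → b ∉ X → n < (F ∩ G.cut X).encard) :
    ∃ f', G.IsUnitFlow F a b (n + 1) f' := by
  rcases exists_isTtrail_or_exists_cut (G := G)
      (fun arc => arc.2 ∈ F ∧ f arc.2 * G.arcSign arc.1 arc.2 < 1) a b with
    ⟨p, hp, hres⟩ | ⟨X, ha, hb, hX⟩
  · exact ⟨_, hf.add_chainFlow hp hres⟩
  · refine absurd (hf.encard_inter_cut ha hb ?_) (hcut X ha hb).ne'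
    rintro e ⟨heF, x, y, he, hx, hy⟩
    rw [cutSign_eq_arcSign he hx hy]
    have hge : ¬f e * G.arcSign x e < 1 := fun hlt => hX e x y he hx hy ⟨heF, hlt⟩
    have hfe := abs_le.1 (hf.abs_le_one e)
    rcases G.arcSign_eq_one_or_neg_one x e with hs | hs <;> rw [hs] at hge ⊢ <;> omega

lemma exists_isTtrail_positive (hf : G.IsUnitFlow F a b (n + 1) f) :
    ∃ p, G.IsTtrail a b p ∧ ∀ arc ∈ p, f arc.2 = G.arcSign arc.1 arc.2 := by
  refine (exists_isTtrail_or_exists_cut _ a b).resolve_right ?_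
  rintro ⟨X, ha, hb, hX⟩
  have hvalue := hf.sum_mul_cutSign ha hb
  have hnonpos : f.sum (fun e z => z * G.cutSign X e) ≤ 0 := by
    refine sum_nonpos fun e _ => ?_
    beta_reduce
    by_cases hcut : e ∈ G.cut X
    · obtain ⟨x, y, he, hx, hy⟩ := hcut
      rw [cutSign_eq_arcSign he hx hy]
      have hfe := abs_le.1 (hf.abs_le_one e)
      have hne := hX e x y he hx hy
      rcases G.arcSign_eq_one_or_neg_one x e with hs | hs <;>
        simp only [hs] at hne ⊢ <;> omega
    · rw [cutSign_eq_zero hcut, mul_zero]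
  omega

lemma exists_edgeDisjoint_ttrails (hf : G.IsUnitFlow F a b n f) :
    ∃ P : Fin n → List (V × E), (∀ i, G.IsTtrail a b (P i)) ∧
      (∀ i, ∀ e ∈ (P i).map Prod.snd, e ∈ F) ∧ ∀ i j, i ≠ j → EdgeDisjoint (P i) (P j) := by
  induction n generalizing F f with
  | zero => exact ⟨Fin.elim0, fun i => i.elim0, fun i => i.elim0, fun i => i.elim0⟩
  | succ n ih =>
    obtain ⟨p, hp, hpos⟩ := hf.exists_isTtrail_positive
    obtain ⟨P, hP, hPF, hdisj⟩ := ih (hf.sub_chainFlow hp hpos)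
    have hpF : ∀ e ∈ p.map Prod.snd, e ∈ F := by
      intro e he
      obtain ⟨⟨x, e⟩, hxe, rfl⟩ := List.mem_map.1 he
      by_contra heF
      have hzero := (hpos _ hxe).symm.trans (hf.eq_zero e heF)
      rcases G.arcSign_eq_one_or_neg_one x e with hs | hs <;> simp [hs] at hzero
    refine ⟨Fin.cons p P, Fin.cases hp hP, Fin.cases hpF fun i e he => (hPF i e he).1, ?_⟩
    refine Fin.cases (Fin.cases (fun h => absurd rfl h) fun j _ e he hej => (hPF j e hej).2 he) ?_
    refine fun i => Fin.cases (fun _ e he hep => (hPF i e he).2 hep) fun j hij => ?_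
    exact hdisj i j (ne_of_apply_ne Fin.succ hij)

end IsUnitFlow

lemma exists_isUnitFlow {k : ℕ}
    (hcut : ∀ X : Set V, a ∈ X → b ∉ X → k ≤ (F ∩ G.cut X).encard) :
    ∃ f, G.IsUnitFlow F a b k f := by
  suffices h : ∀ n ≤ k, ∃ f, G.IsUnitFlow F a b n f from h k le_rfl
  intro n hn
  induction n with
  | zero => exact ⟨0, by simp, by simp, by simp⟩
  | succ n ih =>
    obtain ⟨f, hf⟩ := ih (by omega)
    exact hf.exists_succ fun X ha hb => lt_of_lt_of_le (by exact_mod_cast hn) (hcut X ha hb)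

theorem exists_edgeDisjoint_ttrails_of_le_encard_cut {k : ℕ}
    (hcut : ∀ X : Set V, a ∈ X → b ∉ X → k ≤ (F ∩ G.cut X).encard) :
    ∃ P : Fin k → List (V × E), (∀ i, G.IsTtrail a b (P i)) ∧
      (∀ i, ∀ e ∈ (P i).map Prod.snd, e ∈ F) ∧ ∀ i j, i ≠ j → EdgeDisjoint (P i) (P j) :=
  let ⟨_, hf⟩ := exists_isUnitFlow hcut
  hf.exists_edgeDisjoint_ttrails

end Flows

/-! ### Edge-connectivity and short trails -/

section Connectivity

variable {G} {k : ℕ} {a b c : V} {X : Set V}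

lemma KConn.le_encard_cut (h : G.KConn k a b) (hX : ¬(a ∈ X ↔ b ∈ X)) :
    k ≤ (G.cut X).encard := by
  rcases h with rfl | ⟨P, hP, hdisj⟩
  · exact absurd Iff.rfl hX
  · have hcross (i : Fin k) : ∃ e ∈ (P i).map Prod.snd, e ∈ G.cut X :=
      (hP i).1.exists_mem_cut (by simp [vertices]) hX
    choose g hgP hgX using hcross
    have hinj : Function.Injective g := by
      intro i j hij
      by_contra hne
      exact hdisj i j hne (g i) (hgP i) (hij ▸ hgP j)
    calc (k : ℕ∞) ≤ (Set.range g).encard := by simpa using hinj.encard_range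
      _ ≤ (G.cut X).encard := Set.encard_le_encard (Set.range_subset_iff.2 hgX)

theorem kConn_iff_forall_cut :
    G.KConn k a b ↔ ∀ X, (G.cut X).encard < k → (a ∈ X ↔ b ∈ X) := by
  refine ⟨fun h X hX => by_contra fun hab => hX.not_ge (h.le_encard_cut hab), fun h => ?_⟩
  have hcut : ∀ X : Set V, a ∈ X → b ∉ X → k ≤ (Set.univ ∩ G.cut X).encard := by
    intro X ha hb
    rw [Set.univ_inter]
    exact not_lt.1 fun hX => hb ((h X hX).1 ha)
  obtain ⟨P, hP, -, hdisj⟩ := exists_edgeDisjoint_ttrails_of_le_encard_cut hcut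
  exact Or.inr ⟨P, hP, hdisj⟩

lemma KConn.symm (h : G.KConn k a b) : G.KConn k b a :=
  kConn_iff_forall_cut.2 fun X hX => (kConn_iff_forall_cut.1 h X hX).symm

lemma KConn.trans (hab : G.KConn k a b) (hbc : G.KConn k b c) : G.KConn k a c :=
  kConn_iff_forall_cut.2 fun X hX =>
    (kConn_iff_forall_cut.1 hab X hX).trans (kConn_iff_forall_cut.1 hbc X hX)

lemma exists_cut_of_not_kConn (h : ¬G.KConn k a b) :
    ∃ X, a ∈ X ∧ b ∉ X ∧ (G.cut X).encard < k := by
  rw [kConn_iff_forall_cut] at h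
  push Not at h
  obtain ⟨X, hX, ⟨ha, hb⟩ | ⟨ha, hb⟩⟩ := h
  · exact ⟨X, ha, hb, hX⟩
  · exact ⟨Xᶜ, ha, fun h => h hb, by rwa [cut_compl]⟩

end Connectivity

section Short

variable {G} {a b x y : V} {p s t : List (V × E)}

lemma encard_cut_union_le_two {e g : E} {X Y : Set V} (hX : (G.cut X).encard ≤ 2)
    (hY : (G.cut Y).encard ≤ 2) (he : e ∈ G.cut X) (hg : g ∈ G.cut Y) (he' : e ∉ G.cut (X ∪ Y))
    (hg' : g ∉ G.cut (X ∪ Y)) : (G.cut (X ∪ Y)).encard ≤ 2 := by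
  have h := (encard_cut_union_add_two_le he hg he' hg').trans (add_le_add hX hY)
  exact (ENat.add_le_add_iff_right (by simp)).1 h

/-- The sets are merged one by one, backwards along the chain: the new set is left by an edge of
the chain unless it contains the whole chain, the old one is left by the edge just traversed, and
neither edge leaves the union. -/
lemma IsChain.exists_superset_encard_cut_le_two (hp : G.IsChain x y p)
    (hsmall : ∀ z ∈ vertices p y, ∃ Y : Set V, z ∈ Y ∧ a ∉ Y ∧ (G.cut Y).encard ≤ 2) :
    ∃ Y : Set V, (∀ z ∈ vertices p y, z ∈ Y) ∧ a ∉ Y ∧ (G.cut Y).encard ≤ 2 := by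
  induction p generalizing x with
  | nil => simpa using hsmall
  | cons arc t ih =>
    have hchain := hp
    obtain ⟨rfl, w, hw, ht⟩ := hp
    rw [vertices_cons, List.forall_mem_cons] at hsmall
    obtain ⟨⟨Y, hxY, haY, hY⟩, hsmall⟩ := hsmall
    obtain ⟨X, htX, haX, hX⟩ := ih ht hsmall
    by_cases hxX : arc.1 ∈ X
    · exact ⟨X, List.forall_mem_cons.2 ⟨hxX, htX⟩, haX, hX⟩
    by_cases hallY : ∀ z ∈ vertices (arc :: t) y, z ∈ Y
    · exact ⟨Y, hallY, haY, hY⟩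
    push Not at hallY
    obtain ⟨z, hz, hzY⟩ := hallY
    obtain ⟨g, hgp, hg⟩ := hchain.exists_mem_cut hz (X := Y) (by tauto)
    have hwX : w ∈ X := htX w ht.left_mem_vertices
    have he : arc.2 ∈ G.cut X := (mem_cut_iff hw).2 (by tauto)
    have hXY : ∀ z ∈ vertices (arc :: t) y, z ∈ X ∪ Y :=
      List.forall_mem_cons.2 ⟨Or.inr hxY, fun z hz => Or.inl (htX z hz)⟩
    refine ⟨X ∪ Y, hXY, by simp [haX, haY], encard_cut_union_le_two hX hY he hg ?_ ?_⟩
    · exact hchain.notMem_cut hXY List.mem_cons_self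
    · exact hchain.notMem_cut hXY hgp

lemma IsChain.exists_superset_of_not_kConn (hp : G.IsChain x y p)
    (ha : ∀ z ∈ vertices p y, ¬G.KConn 3 z a) :
    ∃ Y : Set V, (∀ z ∈ vertices p y, z ∈ Y) ∧ a ∉ Y ∧ (G.cut Y).encard ≤ 2 := by
  refine hp.exists_superset_encard_cut_le_two fun z hz => ?_
  obtain ⟨Y, hzY, haY, hY⟩ := exists_cut_of_not_kConn (ha z hz)
  exact ⟨Y, hzY, haY, Order.le_of_lt_add_one hY⟩

lemma ShortW.exists_cut_subset_edges {e : E} (hs : G.ShortW a b ((x, e) :: t)) :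
    ∃ Y : Set V, a ∉ Y ∧ (∀ z ∈ t.map Prod.fst, z ∈ Y) ∧
      G.cut Y ⊆ {g | g ∈ ((x, e) :: t).map Prod.snd} := by
  obtain ⟨⟨⟨rfl, u, hu, ht⟩, hnodup⟩, hab, hinner⟩ := hs
  rcases List.eq_nil_or_concat' t with rfl | ⟨t, ⟨w, e'⟩, rfl⟩
  · exact ⟨∅, by simp, by simp, by simp [cut_empty]⟩
  have hvertices : (t ++ [(w, e')]).map Prod.fst = vertices t w := by simp [vertices]
  rw [List.map_cons, List.tail_cons, hvertices] at hinner
  obtain ⟨_, htw, rfl, b', hb', rfl⟩ := isChain_append.1 ht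
  obtain ⟨Y, htY, hxY, hY⟩ := htw.exists_superset_of_not_kConn hinner
  have hbY : b' ∉ Y := fun hbY =>
    absurd (hab.le_encard_cut (X := Y) (by tauto)) (not_le.2 (hY.trans_lt (by norm_num)))
  have huY : u ∈ Y := htY u htw.left_mem_vertices
  have hwY : w ∈ Y := htY w (by simp [vertices])
  have hpair : ({e, e'} : Set E) ⊆ G.cut Y := by
    rintro g (rfl | rfl)
    · exact (mem_cut_iff hu).2 (by tauto)
    · exact (mem_cut_iff hb').2 (by tauto)
  have hne : e ≠ e' := by
    rintro rfl
    simp at hnodup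
  have hcut : {e, e'} = G.cut Y := by
    refine (Set.toFinite _).eq_of_subset_of_encard_le hpair ?_
    rwa [Set.encard_pair hne]
  refine ⟨Y, hxY, by rwa [hvertices], ?_⟩
  rw [← hcut]
  rintro g (rfl | rfl) <;> simp

lemma ShortW.two_le_encard_cut {X : Set V} (hs : G.ShortW a b s) (ha : a ∈ X) (hb : b ∉ X) :
    2 ≤ ({e | e ∉ s.map Prod.snd} ∩ G.cut X).encard := by
  rcases s with _ | ⟨⟨x, e⟩, t⟩
  · exact absurd (hs.1.1 ▸ ha) hb
  obtain ⟨Y, haY, htY, hcutY⟩ := hs.exists_cut_subset_edges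
  obtain ⟨⟨⟨rfl, u, -, ht⟩, -⟩, hab, -⟩ := hs
  have htail : ∀ g ∈ t.map Prod.snd, g ∉ G.cut (X \ Y) := by
    intro g hg
    rw [← cut_compl]
    refine ht.notMem_cut (fun z hz hzXY => ?_) hg
    rcases List.mem_append.1 hz with hz | hz
    · exact hzXY.2 (htY z hz)
    · exact hb (List.mem_singleton.1 hz ▸ hzXY.1)
  have hsub : G.cut (X \ Y) ⊆
      insert e ({g | g ∉ ((x, e) :: t).map Prod.snd} ∩ G.cut X) := by
    intro g hg
    by_cases hgs : g ∈ ((x, e) :: t).map Prod.snd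
    · exact Or.inl ((List.mem_cons.1 hgs).resolve_right fun hgt => htail g hgt hg)
    · refine Or.inr ⟨hgs, ?_⟩
      obtain ⟨y, z, hyz, hy, hz⟩ := hg
      have hgY : g ∉ G.cut Y := fun hgY => hgs (hcutY hgY)
      rw [mem_cut_iff hyz, not_not] at hgY
      exact ⟨y, z, hyz, hy.1, fun hzX => hz ⟨hzX, fun hzY => hy.2 (hgY.2 hzY)⟩⟩
  have hthree : 3 ≤ (G.cut (X \ Y)).encard :=
    hab.le_encard_cut fun h => hb (h.1 ⟨ha, haY⟩).1
  have hinsert := (hthree.trans (Set.encard_le_encard hsub)).trans (Set.encard_insert_le _ _)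
  exact (ENat.add_le_add_iff_right ENat.one_ne_top).1 hinsert

lemma ShortW.exists_two_edgeDisjoint_ttrails (hs : G.ShortW a b s) :
    ∃ p₁ p₂ : List (V × E), G.IsTtrail a b p₁ ∧ G.IsTtrail a b p₂ ∧
      EdgeDisjoint s p₁ ∧ EdgeDisjoint s p₂ ∧ EdgeDisjoint p₁ p₂ := by
  obtain ⟨P, hP, hPs, hdisj⟩ :=
    exists_edgeDisjoint_ttrails_of_le_encard_cut (k := 2) fun _ => hs.two_le_encard_cut
  exact ⟨P 0, P 1, hP 0, hP 1, fun e he hep => hPs 0 e hep he, fun e he hep => hPs 1 e hep he,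
    hdisj 0 1 (by decide)⟩

lemma IsTtrail.reflTransGen_shortW (hp : G.IsTtrail x y p) (hxy : G.KConn 3 x y) :
    Relation.ReflTransGen (fun u w => ∃ s, G.ShortW u w s) x y := by
  induction hn : p.length using Nat.strong_induction_on generalizing x y p with
  | _ n ih =>
    by_cases hshort : G.ShortW x y p
    · exact .single ⟨p, hshort⟩
    obtain ⟨z, hz, hzx⟩ : ∃ z ∈ (p.map Prod.fst).tail, G.KConn 3 z x := by
      by_contra! hinner
      exact hshort ⟨hp, hxy, hinner⟩
    obtain ⟨hchain, hnodup⟩ := hp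
    rcases p with _ | ⟨⟨x', e⟩, t⟩
    · simp at hz
    obtain ⟨rfl, w, hw, ht⟩ := hchain
    obtain ⟨⟨z, e'⟩, hzt, rfl⟩ := List.mem_map.1 hz
    obtain ⟨q, r, rfl, hq, hr⟩ := ht.exists_append_of_mem hzt
    rw [← List.cons_append, List.map_append] at hnodup
    simp only [List.length_cons, List.length_append] at hn
    have hxz : G.IsTtrail x' z ((x', e) :: q) := ⟨⟨rfl, w, hw, hq⟩, hnodup.of_append_left⟩
    have hzy : G.IsTtrail z y ((z, e') :: r) := ⟨hr, hnodup.of_append_right⟩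
    exact (ih _ (by simp; omega) hxz hzx.symm rfl).trans
      (ih _ (by simp; omega) hzy (hzx.trans hxy) rfl)

end Short

lemma reachable_fromRel {ι : Type*} {R : ι → ι → Prop} {i j : ι} (hij : Relation.EqvGen R i j) :
    (SimpleGraph.fromRel R).Reachable i j := by
  induction hij with
  | rel i j hij =>
    by_cases hne : i = j
    · rw [hne]
    · exact SimpleGraph.Adj.reachable ⟨hne, Or.inl hij⟩
  | refl i => rfl
  | symm i j _ ih => exact ih.symm
  | trans i j k _ _ ihij ihjk => exact ihij.trans ihjk

lemma exists_spanning_pairs {ι : Type*} [Finite ι] {m : ℕ} (hm : Nat.card ι = m)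
    {R : ι → ι → Prop} (hR : ∀ i j, Relation.EqvGen R i j) :
    ∃ a b : Fin (m - 1) → ι, (∀ r, a r ≠ b r ∧ R (a r) (b r)) ∧
      ∀ i j, Relation.ReflTransGen
        (fun x y => ∃ r, (a r = x ∧ b r = y) ∨ (a r = y ∧ b r = x)) i j := by
  rcases isEmpty_or_nonempty ι with hι | hι
  · obtain rfl : m = 0 := by simpa using hm.symm
    exact ⟨Fin.elim0, Fin.elim0, fun r => r.elim0, hι.elim⟩
  have hconn : (SimpleGraph.fromRel R).Connected := ⟨fun i j => reachable_fromRel (hR i j)⟩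
  obtain ⟨T, hTR, hT⟩ := hconn.exists_isTree_le
  have hcard : Nat.card T.edgeSet = m - 1 := by
    have := (SimpleGraph.isTree_iff_connected_and_card.1 hT).2
    omega
  let φ : T.edgeSet ≃ Fin (m - 1) := Finite.equivFinOfCardEq hcard
  have hedge (r : Fin (m - 1)) :
      ∃ i j, (φ.symm r : Sym2 ι) = s(i, j) ∧ i ≠ j ∧ R i j := by
    obtain ⟨e, he⟩ := φ.symm r
    induction e with | _ i j
    obtain ⟨hne, hij | hji⟩ := hTR he
    · exact ⟨i, j, rfl, hne, hij⟩
    · exact ⟨j, i, Sym2.eq_swap, hne.symm, hji⟩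
  choose a b hends hne hab using hedge
  refine ⟨a, b, fun r => ⟨hne r, hab r⟩, fun i j => ?_⟩
  refine Relation.ReflTransGen.mono (fun x y hxy => ⟨φ ⟨s(x, y), hxy⟩, ?_⟩) _ _
    ((SimpleGraph.reachable_iff_reflTransGen i j).1 (hT.connected i j))
  have hxy' := hends (φ ⟨s(x, y), hxy⟩)
  rw [Equiv.symm_apply_apply, Sym2.eq_iff] at hxy'
  tauto

lemma reflTransGen_shortW_of_class {G : Multigraph V E} {ι : Type*} {v : ι → V}
    (hinj : Function.Injective v) (hconn : ∀ i j, G.KConn 3 (v i) (v j))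
    (hclass : ∀ w i, G.KConn 3 w (v i) → ∃ j, w = v j) (i j : ι) :
    Relation.ReflTransGen (fun i j => ∃ s, G.ShortW (v i) (v j) s) i j := by
  have hV : Relation.ReflTransGen (fun u w => ∃ s, G.ShortW u w s) (v i) (v j) := by
    rcases hconn i j with hij | ⟨P, hP, -⟩
    · rw [hij]
    · exact (hP 0).reflTransGen_shortW (hconn i j)
  suffices h : ∀ w, Relation.ReflTransGen (fun u w => ∃ s, G.ShortW u w s) (v i) w →
      ∃ k, w = v k ∧ Relation.ReflTransGen (fun i j => ∃ s, G.ShortW (v i) (v j) s) i k by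
    obtain ⟨k, hk, hik⟩ := h _ hV
    rwa [hinj hk]
  intro w hw
  induction hw with
  | refl => exact ⟨i, rfl, .refl⟩
  | tail _ hstep ih =>
    obtain ⟨s, hs⟩ := hstep
    obtain ⟨k, rfl, hik⟩ := ih
    obtain ⟨l, rfl⟩ := hclass _ k hs.2.1.symm
    exact ⟨l, rfl, hik.tail ⟨s, hs⟩⟩

theorem stmt16_general (G : Multigraph V E) (m : ℕ) (v : Fin m → V)
    (hinj : Function.Injective v)
    (hconn : ∀ i j, G.KConn 3 (v i) (v j))
    (hclass : ∀ w i, G.KConn 3 w (v i) → ∃ j, w = v j) :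
    ∃ (s : Fin (m - 1) → List (V × E)) (a b : Fin (m - 1) → Fin m),
      (∀ r, s r ≠ [] ∧ G.ShortW (v (a r)) (v (b r)) (s r)) ∧
      (∀ i j : Fin m, Relation.ReflTransGen
        (fun x y => ∃ r, (a r = x ∧ b r = y) ∨ (a r = y ∧ b r = x)) i j) ∧
      (∀ r, v (a r) ≠ v (b r) →
        ∃ p₁ p₂ : List (V × E),
          G.IsTtrail (v (a r)) (v (b r)) p₁ ∧
          G.IsTtrail (v (a r)) (v (b r)) p₂ ∧
          EdgeDisjoint (s r) p₁ ∧ EdgeDisjoint (s r) p₂ ∧ EdgeDisjoint p₁ p₂) := by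
  have hgen (i j : Fin m) : Relation.EqvGen (fun i j => ∃ s, G.ShortW (v i) (v j) s) i j :=
    Relation.EqvGen.reflTransGen_le_eqvGen _ _ _
      (reflTransGen_shortW_of_class hinj hconn hclass i j)
  obtain ⟨a, b, hab, hspan⟩ := exists_spanning_pairs (Nat.card_fin m) hgen
  choose hne s hs using hab
  refine ⟨s, a, b, fun r => ⟨fun hnil => ?_, hs r⟩, hspan,
    fun r _ => (hs r).exists_two_edgeDisjoint_ttrails⟩
  have hchain := (hs r).1.1
  rw [hnil] at hchain
  exact hne r (hinj hchain)

end General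

theorem stmt16 (G : Multigraph V E) (m : ℕ) (v : Fin m → V)
    (hinj : Function.Injective v)
    (hconn : ∀ i j, G.KConn 3 (v i) (v j))
    (hclass : ∀ w i, G.KConn 3 w (v i) → ∃ j, w = v j) :
    ∃ (s : Fin (m - 1) → List (V × E)) (a b : Fin (m - 1) → Fin m),
      (∀ r, s r ≠ [] ∧ G.ShortW (v (a r)) (v (b r)) (s r)) ∧
      (∀ i j : Fin m, Relation.ReflTransGen
        (fun x y => ∃ r, (a r = x ∧ b r = y) ∨ (a r = y ∧ b r = x)) i j) ∧
      (∀ r, v (a r) ≠ v (b r) →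
        ∃ p₁ p₂ : List (V × E),
          G.IsTtrail (v (a r)) (v (b r)) p₁ ∧
          G.IsTtrail (v (a r)) (v (b r)) p₂ ∧
          EdgeDisjoint (s r) p₁ ∧ EdgeDisjoint (s r) p₂ ∧ EdgeDisjoint p₁ p₂) :=
  stmt16_general G m v hinj hconn hclass

end Multigraph
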